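/- arXiv:2205.08618 — 2 statements merged into one kernel-verified Lean document; each statement's English description precedes it below -/
import Mathlib

section
/- For every natural number n ≥ 1, Σ_{k=1}^n C(n,k) (−1)^{k−1} H_k / k = H_n^{(2)}, where H_k is the k-th harmonic number and H_n^{(2)} = Σ_{j=1}^n 1/j² is the n-th generalized harmonic number of order 2. -/
/-!
Write `S n` for the sum. Pascal's rule gives
`S (n+1) - S n = ∑_{i ≤ n} C(n,i) (-1)^i H_{i+1} / (i+1)`, and the absorption identity
`C(n,i) / (i+1) = C(n+1,i+1) / (n+1)` turns this into
`(∑_{i ≤ n} C(n+1,i+1) (-1)^i H_{i+1}) / (n+1)`. Applying the same two rules to this last sum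
reduces it to `(∑_{i ≤ n} C(n+1,i+1) (-1)^i) / (n+1) = 1 / (n+1)`, the alternating sum of a row of
Pascal's triangle without its first entry. Hence `S (n+1) - S n = 1 / (n+1)^2`, and `S 0 = 0`.
-/

open Finset

/-- The `k`-th harmonic number `H_k = 1 + 1/2 + ⋯ + 1/k`, with `H_0 = 0`. -/
noncomputable def H (k : ℕ) : ℝ := ∑ j ∈ Finset.range k, 1 / ((j : ℝ) + 1)

/-- The `n`-th generalized harmonic number of order 2, `H_n^{(2)} = ∑_{j=1}^n 1/j²`. -/
noncomputable def H2 (n : ℕ) : ℝ := ∑ j ∈ Finset.range n, 1 / ((j : ℝ) + 1) ^ 2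

lemma sum_choose_pascal (n : ℕ) (a : ℕ → ℝ) :
    ∑ i ∈ range (n + 1), ((n + 1).choose (i + 1) : ℝ) * a i =
      ∑ i ∈ range (n + 1), (n.choose i : ℝ) * a i +
        ∑ i ∈ range n, (n.choose (i + 1) : ℝ) * a i := by
  have h : ∑ i ∈ range n, (n.choose (i + 1) : ℝ) * a i =
      ∑ i ∈ range (n + 1), (n.choose (i + 1) : ℝ) * a i := by
    simp [sum_range_succ]
  rw [h, ← sum_add_distrib]
  refine sum_congr rfl fun i _ => ?_
  rw [Nat.choose_succ_succ]
  push_cast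
  ring

lemma sum_choose_absorb (n : ℕ) (a : ℕ → ℝ) :
    ∑ i ∈ range (n + 1), (n.choose i : ℝ) * (a i / ((i : ℝ) + 1)) =
      (∑ i ∈ range (n + 1), ((n + 1).choose (i + 1) : ℝ) * a i) / ((n : ℝ) + 1) := by
  rw [sum_div]
  refine sum_congr rfl fun i _ => ?_
  have h : ((n : ℝ) + 1) * n.choose i = (n + 1).choose (i + 1) * ((i : ℝ) + 1) := by
    exact_mod_cast Nat.add_one_mul_choose_eq n i
  have hn : (n : ℝ) + 1 ≠ 0 := by positivity
  have hi : (i : ℝ) + 1 ≠ 0 := by positivity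
  field_simp
  linear_combination a i * h

lemma sum_choose_alternating (n : ℕ) :
    ∑ i ∈ range (n + 1), ((n + 1).choose (i + 1) : ℝ) * (-1) ^ i = 1 := by
  have h : ∑ i ∈ range (n + 2), (-1 : ℝ) ^ i * ((n + 1).choose i : ℝ) = 0 := by
    exact_mod_cast Int.alternating_sum_range_choose_of_ne (Nat.succ_ne_zero n)
  rw [sum_range_succ'] at h
  have e : ∑ i ∈ range (n + 1), ((n + 1).choose (i + 1) : ℝ) * (-1) ^ i =
      -∑ i ∈ range (n + 1), (-1 : ℝ) ^ (i + 1) * ((n + 1).choose (i + 1) : ℝ) := by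
    rw [← sum_neg_distrib]
    exact sum_congr rfl fun i _ => by ring
  simp only [pow_zero, Nat.choose_zero_right, Nat.cast_one, mul_one] at h
  linarith

/-- The binomial transform of the harmonic numbers is `1 / (n + 1)`. -/
lemma sum_choose_H (n : ℕ) :
    ∑ i ∈ range (n + 1), ((n + 1).choose (i + 1) : ℝ) * ((-1) ^ i * H (i + 1)) =
      1 / ((n : ℝ) + 1) := by
  -- Since `H 0 = 0`, the second Pascal sum is minus the first with `H i` in place of `H (i + 1)`.
  have e : ∑ i ∈ range n, (n.choose (i + 1) : ℝ) * ((-1) ^ i * H (i + 1)) =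
      -∑ i ∈ range (n + 1), (n.choose i : ℝ) * ((-1) ^ i * H i) := by
    have h0 : H 0 = 0 := by simp [H]
    rw [sum_range_succ', h0, mul_zero, mul_zero, add_zero, ← sum_neg_distrib]
    exact sum_congr rfl fun i _ => by ring
  have r := sum_choose_absorb n fun i => (-1) ^ i
  rw [sum_choose_alternating] at r
  rw [sum_choose_pascal, e, ← sub_eq_add_neg, ← sum_sub_distrib, ← r]
  refine sum_congr rfl fun i _ => ?_
  have hs : H (i + 1) = H i + 1 / ((i : ℝ) + 1) := by simp [H, sum_range_succ]
  rw [hs]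
  ring

lemma sum_choose_H_div (n : ℕ) :
    ∑ i ∈ range n, (n.choose (i + 1) : ℝ) * ((-1) ^ i * H (i + 1) / ((i : ℝ) + 1)) = H2 n := by
  induction n with
  | zero => simp [H2]
  | succ n ih =>
    have hs : H2 (n + 1) = H2 n + 1 / ((n : ℝ) + 1) ^ 2 := by simp [H2, sum_range_succ]
    rw [sum_choose_pascal, ih, sum_choose_absorb n fun i => (-1) ^ i * H (i + 1),
      sum_choose_H, hs, div_div, ← sq, add_comm]

/-- For `n ≥ 1`, `∑_{k=1}^n C(n,k) (−1)^{k−1} H_k / k = H_n^{(2)}`. -/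
theorem binomial_harmonic_eq_H2 (n : ℕ) (hn : 1 ≤ n) :
    ∑ k ∈ Finset.Icc 1 n, (n.choose k : ℝ) * (-1) ^ (k - 1) * H k / (k : ℝ) = H2 n := by
  rw [← sum_choose_H_div, range_eq_Ico, ← Finset.Ico_add_one_right_eq_Icc,
    ← Finset.sum_Ico_add' _ 0 n 1]
  refine sum_congr rfl fun i _ => ?_
  rw [Nat.add_sub_cancel]
  push_cast
  ring
end

section
/- For every natural number n, Σ_{k=0}^n C(n,k) (−1)^{k−1} H_k/(k+1) = H_n/(n+1), where H_k denotes the k-th harmonic number. -/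
/-!
The absorption identity `C(n,k)/(k+1) = C(n+1,k+1)/(n+1)` turns the claim into
`∑_{k ≤ n} C(n+1,k+1) (-1)^k H_k = -H_n` (`sum_choose_succ_mul_H`). Write `D n` for this left
side. Pascal's rule gives `D (n+1) = D n + ∑_{k ≤ n+1} C(n+1,k) (-1)^k H_k`. Shifting the index in
the last sum and using `H_{j+1} = H_j + 1/(j+1)` produces `-D n`, which cancels, and leaves
`-∑_{j ≤ n} C(n+1,j+1) (-1)^j/(j+1)`. This equals `-H_{n+1}` by the classical binomial expansion
of the harmonic numbers (`sum_choose_succ_div_succ`).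
-/

open Finset

lemma H_succ (k : ℕ) : H (k + 1) = H k + 1 / ((k : ℝ) + 1) := by
  simp [H, Finset.sum_range_succ]

lemma choose_div_succ (n k : ℕ) :
    (n.choose k : ℝ) / ((k : ℝ) + 1) = ((n + 1).choose (k + 1) : ℝ) / ((n : ℝ) + 1) := by
  have h : ((n : ℝ) + 1) * (n.choose k : ℝ) = ((n + 1).choose (k + 1) : ℝ) * ((k : ℝ) + 1) := by
    exact_mod_cast Nat.add_one_mul_choose_eq n k
  field_simp
  linarith

/-- The alternating sum of a row of Pascal's triangle vanishes; here its initial entry `1` has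
been moved to the other side. -/
lemma sum_choose_succ_alternating (n : ℕ) :
    ∑ k ∈ Finset.range (n + 1), ((n + 1).choose (k + 1) : ℝ) * (-1) ^ k = 1 := by
  have h : ∑ k ∈ Finset.range (n + 1 + 1), (-1 : ℝ) ^ k * ((n + 1).choose k : ℝ) = 0 := by
    exact_mod_cast Int.alternating_sum_range_choose_of_ne (Nat.succ_ne_zero n)
  rw [Finset.sum_range_succ'] at h
  simp only [pow_succ, pow_zero, Nat.choose_zero_right, Nat.cast_one, mul_one, mul_neg, neg_mul,
    Finset.sum_neg_distrib] at h
  simp only [mul_comm _ ((-1 : ℝ) ^ _)]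
  linarith

/-- The binomial expansion `H_n = ∑_{1 ≤ i ≤ n} C(n,i) (-1)^{i-1}/i`, indexed by `j = i - 1`. -/
lemma sum_choose_succ_div_succ (n : ℕ) :
    ∑ j ∈ Finset.range n, (n.choose (j + 1) : ℝ) * (-1) ^ j / ((j : ℝ) + 1) = H n := by
  induction n with
  | zero => simp [H]
  | succ n ih =>
    have hP : ∑ j ∈ Finset.range (n + 1), (n.choose j : ℝ) * (-1) ^ j / ((j : ℝ) + 1)
        = 1 / ((n : ℝ) + 1) := by
      trans (∑ j ∈ Finset.range (n + 1), ((n + 1).choose (j + 1) : ℝ) * (-1) ^ j) / ((n : ℝ) + 1)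
      swap
      · rw [sum_choose_succ_alternating]
      rw [Finset.sum_div]
      refine Finset.sum_congr rfl fun j _ => ?_
      rw [mul_div_right_comm, choose_div_succ, mul_div_right_comm]
    have hS : ∑ j ∈ Finset.range (n + 1), (n.choose (j + 1) : ℝ) * (-1) ^ j / ((j : ℝ) + 1)
        = H n := by
      rw [Finset.sum_range_succ, ih]
      simp
    rw [H_succ, ← hS, ← hP, ← Finset.sum_add_distrib]
    refine Finset.sum_congr rfl fun j _ => ?_
    rw [Nat.choose_succ_succ]
    push_cast
    ring

lemma sum_choose_succ_mul_H (n : ℕ) :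
    ∑ k ∈ Finset.range (n + 1), ((n + 1).choose (k + 1) : ℝ) * (-1) ^ k * H k = -H n := by
  cases n with
  | zero => simp [H]
  | succ n =>
    have hPascal : ∑ k ∈ Finset.range (n + 1 + 1),
          ((n + 1 + 1).choose (k + 1) : ℝ) * (-1) ^ k * H k
        = ∑ k ∈ Finset.range (n + 1 + 1), ((n + 1).choose k : ℝ) * (-1) ^ k * H k
          + ∑ k ∈ Finset.range (n + 1), ((n + 1).choose (k + 1) : ℝ) * (-1) ^ k * H k := by
      have hlast : ∑ k ∈ Finset.range (n + 1), ((n + 1).choose (k + 1) : ℝ) * (-1) ^ k * H k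
          = ∑ k ∈ Finset.range (n + 1 + 1),
              ((n + 1).choose (k + 1) : ℝ) * (-1) ^ k * H k := by
        rw [Finset.sum_range_succ _ (n + 1)]
        simp
      rw [hlast, ← Finset.sum_add_distrib]
      refine Finset.sum_congr rfl fun k _ => ?_
      rw [Nat.choose_succ_succ (n + 1) k]
      push_cast
      ring
    have hH0 : H 0 = 0 := by simp [H]
    rw [hPascal, Finset.sum_range_succ', hH0, mul_zero, add_zero, ← Finset.sum_add_distrib,
      ← sum_choose_succ_div_succ (n + 1), ← Finset.sum_neg_distrib]
    refine Finset.sum_congr rfl fun k _ => ?_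
    rw [H_succ]
    ring

/-- `∑_{k=0}^n C(n,k) (−1)^{k−1} H_k/(k+1) = H_n/(n+1)`. (The `k = 0` term vanishes
since `H_0 = 0`.) -/
theorem binomial_harmonic_div_succ (n : ℕ) :
    ∑ k ∈ Finset.range (n + 1), (n.choose k : ℝ) * (-1) ^ (k - 1) * H k / ((k : ℝ) + 1) =
      H n / ((n : ℝ) + 1) := by
  rw [← neg_neg (H n), ← sum_choose_succ_mul_H, ← Finset.sum_neg_distrib, Finset.sum_div]
  refine Finset.sum_congr rfl fun k _ => ?_
  -- Truncated subtraction makes the sign wrong at `k = 0`, where both terms vanish.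
  cases k with
  | zero => simp [H]
  | succ k =>
    have h := choose_div_succ n (k + 1)
    rw [Nat.add_sub_cancel]
    calc (n.choose (k + 1) : ℝ) * (-1) ^ k * H (k + 1) / (((k + 1 : ℕ) : ℝ) + 1)
        = (n.choose (k + 1) : ℝ) / (((k + 1 : ℕ) : ℝ) + 1) * ((-1) ^ k * H (k + 1)) := by ring
      _ = _ := by
        rw [h]
        ring
end
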